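/- Assume none of p_1, p_2, q_1, q_2 is a root of unity. Then the extended quantized Weyl algebras A_1 = A_{p_1}(λ_1, μ_1, K_{q_1}[s_1,t_1]) and A_2 = A_{p_2}(λ_2, μ_2, K_{q_2}[s_2,t_2]) are isomorphic as K-algebras if and only if one of the following four conditions holds: (i) p_1 = p_2, q_1 = q_2, λ_1 = λ_2, μ_1 = μ_2; (ii) p_1 = p_2⁻¹, q_1 = q_2, λ_1 = λ_2⁻¹, μ_1 = μ_2⁻¹; (iii) p_1 = p_2, q_1 = q_2⁻¹, λ_1 = μ_2, λ_2 = μ_1; (iv) p_1 = p_2⁻¹, q_1 = q_2⁻¹, λ_1 = μ_2⁻¹, λ_2 = μ_1⁻¹. -/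

import Mathlib

/-!
The element `z = xy - yx` satisfies `xz = p zx`, `zy = p yz` and commutes with `s` and `t`, and
`z = (p - 1) yx + 1`. So inverting `x` turns the algebra `A` into (part of) a quantum torus in
`x, z, s, t`, with `y = (p - 1)⁻¹ (z - 1) x⁻¹`; `toTorus` is the resulting map, and it is
injective by a leading-term argument on the spanning set `y^a x^b s^j t^k`. Its image has
nonnegative exponents in `z, s, t`.

A nonzero normal element `n` satisfies `n a = a' n` for all `a`. Support considerations in the
torus show that `a'` is a multiple of `a` for `a = x, z, s, t`; as `p` and `q` are not roots of
unity, the commutation factors with these elements determine an exponent, so the image of `n` is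
a single monomial. Comparison with `y` shows that its `x`-exponent vanishes. Hence the nonzero
normal elements are exactly the `c z^i s^j t^k` (`IsNormalEl.eq_smul`).

An isomorphism preserves normality and so permutes `z, s, t` up to scalars, and among these only
`z` commutes with the other two (`straight_or_swapped`). After composing with the exchange of
`s` and `t` if necessary, `s` and `t` are fixed up to scalars. An exponent `g` occurring in the
image of `x` and an exponent `g'` occurring in the image of `y` then have opposite `x`-, `s`- and
`t`-coordinates, and since the latter two are nonnegative they vanish. With `n` the
`x`-coordinate of `g` this gives `p₁ = p₂^n`, `λ₁ = λ₂^n`, `μ₁ = μ₂^n`; the inverse isomorphism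
shows `n = ±1`. Conversely, exchanging `s` and `t` and exchanging `x` and `y` (up to scalars)
realise the listed coincidences.
-/

noncomputable section

open FreeAlgebra

/-- Relations of the extended quantized Weyl algebra `A_p(lam, mu, K_q[s,t])`. -/
inductive ExtWeylRel (K : Type*) [Field K] (p q lam mu : K) :
    FreeAlgebra K (Fin 4) → FreeAlgebra K (Fin 4) → Prop
  | weyl : ExtWeylRel K p q lam mu (ι K (0 : Fin 4) * ι K 1 - p • (ι K 1 * ι K 0)) 1
  | st : ExtWeylRel K p q lam mu (ι K (2 : Fin 4) * ι K 3) (q • (ι K 3 * ι K 2))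
  | sx : ExtWeylRel K p q lam mu (ι K (2 : Fin 4) * ι K 0) (lam • (ι K 0 * ι K 2))
  | sy : ExtWeylRel K p q lam mu (ι K (2 : Fin 4) * ι K 1) (lam⁻¹ • (ι K 1 * ι K 2))
  | tx : ExtWeylRel K p q lam mu (ι K (3 : Fin 4) * ι K 0) (mu • (ι K 0 * ι K 3))
  | ty : ExtWeylRel K p q lam mu (ι K (3 : Fin 4) * ι K 1) (mu⁻¹ • (ι K 1 * ι K 3))

/-- The extended quantized Weyl algebra `A_p(lam, mu, K_q[s,t])`. -/
abbrev ExtWeyl (K : Type*) [Field K] (p q lam mu : K) : Type _ :=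
  RingQuot (ExtWeylRel K p q lam mu)

/-! ### The quantum torus -/

/-- Exponent vectors of monomials in the quantum torus; the coordinates `0, 1, 2, 3` are the
exponents of `x`, `z`, `s`, `t`. -/
abbrev Expo := Fin 4 → ℤ

/-- The bicharacter that defines the quantum torus: `e_a * e_b = bichar a b • e_{a+b}`.
It encodes `xz = p zx`, `st = q ts`, `sx = l xs`, `tx = m xt`, with all other pairs of
variables commuting. -/
def bichar {K : Type*} [Field K] (p q l m : Kˣ) (a b : Expo) : Kˣ :=
  p ^ (a 0 * b 1) * q ^ (a 2 * b 3) * l ^ (a 2 * b 0) * m ^ (a 3 * b 0)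

section Torus

variable {K : Type*} [Field K] {p q l m : Kˣ}

lemma bichar_add_left (a b d : Expo) :
    bichar p q l m (a + b) d = bichar p q l m a d * bichar p q l m b d := by
  simp only [bichar, Pi.add_apply, add_mul, zpow_add]
  ac_rfl

lemma bichar_add_right (a b d : Expo) :
    bichar p q l m a (b + d) = bichar p q l m a b * bichar p q l m a d := by
  simp only [bichar, Pi.add_apply, mul_add, zpow_add]
  ac_rfl

@[simp] lemma bichar_zero_left (a : Expo) : bichar p q l m 0 a = 1 := by simp [bichar]

@[simp] lemma bichar_zero_right (a : Expo) : bichar p q l m a 0 = 1 := by simp [bichar]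

/-- The quantum torus: the group algebra of `ℤ⁴` with multiplication twisted by `bichar`. -/
@[nolint unusedArguments]
def QTorus (K : Type*) [Field K] (_p _q _l _m : Kˣ) : Type _ := Expo →₀ K

namespace QTorus

instance : AddCommGroup (QTorus K p q l m) := inferInstanceAs (AddCommGroup (Expo →₀ K))

instance : Module K (QTorus K p q l m) := inferInstanceAs (Module K (Expo →₀ K))

/-- The coefficient of the monomial with exponent `g`. -/
def coeff (f : QTorus K p q l m) (g : Expo) : K := (show Expo →₀ K from f) g

/-- The finite set of exponents occurring in `f`. -/
def supp (f : QTorus K p q l m) : Finset Expo := (show Expo →₀ K from f).support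

/-- The term `u • e_a`. -/
def mono (a : Expo) (u : K) : QTorus K p q l m := (Finsupp.single a u : Expo →₀ K)

@[simp] lemma mem_supp {f : QTorus K p q l m} {g : Expo} : g ∈ f.supp ↔ f.coeff g ≠ 0 :=
  Finsupp.mem_support_iff

@[ext] lemma ext {f h : QTorus K p q l m} (H : ∀ g, f.coeff g = h.coeff g) : f = h :=
  Finsupp.ext H

@[simp] lemma coeff_zero (g : Expo) : (0 : QTorus K p q l m).coeff g = 0 := rfl

@[simp] lemma coeff_add (f h : QTorus K p q l m) (g : Expo) :
    (f + h).coeff g = f.coeff g + h.coeff g := rfl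

@[simp] lemma coeff_sub (f h : QTorus K p q l m) (g : Expo) :
    (f - h).coeff g = f.coeff g - h.coeff g := rfl

@[simp] lemma coeff_smul (r : K) (f : QTorus K p q l m) (g : Expo) :
    (r • f).coeff g = r * f.coeff g := rfl

lemma coeff_mono (a : Expo) (u : K) (g : Expo) :
    (mono a u : QTorus K p q l m).coeff g = if a = g then u else 0 :=
  Finsupp.single_apply

lemma mono_add (a : Expo) (u v : K) :
    (mono a (u + v) : QTorus K p q l m) = mono a u + mono a v := Finsupp.single_add a u v

@[simp] lemma smul_mono (a : Expo) (r u : K) :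
    r • (mono a u : QTorus K p q l m) = mono a (r * u) := Finsupp.smul_single r a u

@[elab_as_elim]
lemma induction_on {P : QTorus K p q l m → Prop} (f : QTorus K p q l m) (h0 : P 0)
    (hadd : ∀ f g, P f → P g → P (f + g)) (hmono : ∀ a u, P (mono a u)) : P f :=
  Finsupp.induction_linear f h0 hadd hmono

/-- The linear map determined by its values on the monomials `e_a`. -/
def liftL {M : Type*} [AddCommMonoid M] [Module K M] (F : Expo → M) : QTorus K p q l m →ₗ[K] M :=
  (Finsupp.lsum K fun a => LinearMap.toSpanSingleton K M (F a) : (Expo →₀ K) →ₗ[K] M)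

lemma liftL_mono {M : Type*} [AddCommMonoid M] [Module K M] (F : Expo → M) (a : Expo) (u : K) :
    liftL F (mono a u : QTorus K p q l m) = u • F a :=
  Finsupp.lsum_single (R := K) K (fun a => LinearMap.toSpanSingleton K M (F a)) a u

/-- The twisted multiplication as a bilinear map. -/
def mulL : QTorus K p q l m →ₗ[K] QTorus K p q l m →ₗ[K] QTorus K p q l m :=
  liftL fun a => liftL fun b => mono (a + b) (bichar p q l m a b : K)

lemma mulL_mono (a b : Expo) (u v : K) :
    mulL (mono a u : QTorus K p q l m) (mono b v) = mono (a + b) (u * v * bichar p q l m a b) := by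
  rw [mulL, liftL_mono, LinearMap.smul_apply, liftL_mono, smul_mono, smul_mono, mul_assoc]

instance : Mul (QTorus K p q l m) := ⟨fun f h => mulL f h⟩

instance : One (QTorus K p q l m) := ⟨mono 0 1⟩

lemma one_def : (1 : QTorus K p q l m) = mono 0 1 := rfl

lemma mul_eq (f h : QTorus K p q l m) : f * h = mulL f h := rfl

@[simp] lemma mono_mul_mono (a b : Expo) (u v : K) :
    (mono a u * mono b v : QTorus K p q l m) = mono (a + b) (u * v * bichar p q l m a b) :=
  mulL_mono a b u v

instance : Ring (QTorus K p q l m) where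
  __ := (inferInstance : AddCommGroup (QTorus K p q l m))
  left_distrib a b d := by simp only [mul_eq, map_add]
  right_distrib a b d := by simp only [mul_eq, map_add, LinearMap.add_apply]
  zero_mul a := by simp only [mul_eq, map_zero, LinearMap.zero_apply]
  mul_zero a := by simp only [mul_eq, map_zero]
  mul_assoc f g h := by
    have hm : ∀ a b d u v w, ((mono a u * mono b v) * mono d w : QTorus K p q l m) =
        mono a u * (mono b v * mono d w) := by
      intro a b d u v w
      simp only [mono_mul_mono, bichar_add_left, bichar_add_right, add_assoc, Units.val_mul]
      congr 1
      ring
    simp only [mul_eq] at hm ⊢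
    induction f using induction_on with
    | h0 => simp only [map_zero, LinearMap.zero_apply]
    | hadd f1 f2 h1 h2 => simp only [map_add, LinearMap.add_apply, h1, h2]
    | hmono a u =>
      induction g using induction_on with
      | h0 => simp only [map_zero, LinearMap.zero_apply]
      | hadd f1 f2 h1 h2 => simp only [map_add, LinearMap.add_apply, h1, h2]
      | hmono b v =>
        induction h using induction_on with
        | h0 => simp only [map_zero]
        | hadd f1 f2 h1 h2 => simp only [map_add, h1, h2]
        | hmono d w => exact hm ..
  one_mul f := by
    rw [one_def, mul_eq]
    induction f using induction_on with
    | h0 => simp only [map_zero]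
    | hadd f1 f2 h1 h2 => simp only [map_add, h1, h2]
    | hmono a u => rw [mulL_mono]; simp
  mul_one f := by
    rw [one_def, mul_eq]
    induction f using induction_on with
    | h0 => simp only [map_zero, LinearMap.zero_apply]
    | hadd f1 f2 h1 h2 => simp only [map_add, LinearMap.add_apply, h1, h2]
    | hmono a u => rw [mulL_mono]; simp

instance : Algebra K (QTorus K p q l m) :=
  Algebra.ofModule (fun r f h => by simp only [mul_eq, map_smul, LinearMap.smul_apply])
    (fun r f h => by simp only [mul_eq, map_smul])

lemma algebraMap_eq (r : K) : algebraMap K (QTorus K p q l m) r = mono 0 r := by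
  rw [Algebra.algebraMap_eq_smul_one, one_def, smul_mono, mul_one]

lemma coeff_mono_mul (d : Expo) (u : K) (f : QTorus K p q l m) (g : Expo) :
    (mono d u * f).coeff g = u * bichar p q l m d (g - d) * f.coeff (g - d) := by
  induction f using induction_on with
  | h0 => simp
  | hadd f1 f2 h1 h2 => simp only [mul_add, coeff_add, h1, h2]
  | hmono a v =>
    rw [mono_mul_mono, coeff_mono, coeff_mono]
    by_cases h : d + a = g
    · subst h; simp; ring
    · have h' : a ≠ g - d := fun h' => h (by rw [h']; abel)
      simp [h, h']

lemma coeff_mul_mono (d : Expo) (u : K) (f : QTorus K p q l m) (g : Expo) :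
    (f * mono d u).coeff g = f.coeff (g - d) * u * bichar p q l m (g - d) d := by
  induction f using induction_on with
  | h0 => simp
  | hadd f1 f2 h1 h2 => simp only [add_mul, coeff_add, h1, h2]
  | hmono a v =>
    rw [mono_mul_mono, coeff_mono, coeff_mono]
    by_cases h : a + d = g
    · subst h; simp
    · have h' : a ≠ g - d := fun h' => h (by rw [h']; abel)
      simp [h, h']

lemma eq_sum (f : QTorus K p q l m) : f = ∑ a ∈ f.supp, mono a (f.coeff a) :=
  (Finsupp.sum_single (show Expo →₀ K from f)).symm

lemma exists_coeff_ne_zero {f : QTorus K p q l m} (hf : f ≠ 0) : ∃ g, f.coeff g ≠ 0 := by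
  by_contra! H
  exact hf (ext H)

lemma coeff_sum {ι : Type*} (s : Finset ι) (F : ι → QTorus K p q l m) (g : Expo) :
    (∑ i ∈ s, F i).coeff g = ∑ i ∈ s, (F i).coeff g :=
  Finsupp.finsetSum_apply s F g

lemma coeff_mul (f h : QTorus K p q l m) (g : Expo) :
    (f * h).coeff g =
      ∑ a ∈ f.supp, f.coeff a * bichar p q l m a (g - a) * h.coeff (g - a) := by
  conv_lhs => rw [eq_sum f]
  rw [Finset.sum_mul, coeff_sum]
  simp only [coeff_mono_mul]

/-- A coefficient of a product to which only one pair of terms contributes. -/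
lemma coeff_mul_of_unique (f h : QTorus K p q l m) (a b : Expo)
    (H : ∀ u v, f.coeff u ≠ 0 → h.coeff v ≠ 0 → u + v = a + b → u = a) :
    (f * h).coeff (a + b) = f.coeff a * bichar p q l m a b * h.coeff b := by
  rw [coeff_mul, Finset.sum_eq_single a]
  · simp
  · intro u hu hua
    by_contra hne
    refine hua (H u (a + b - u) (mem_supp.1 hu) ?_ (by abel))
    exact right_ne_zero_of_mul hne
  · intro ha
    have : f.coeff a = 0 := by simpa using ha
    simp [this]

lemma support_mul {f h : QTorus K p q l m} {g : Expo} (hg : (f * h).coeff g ≠ 0) :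
    ∃ a b, f.coeff a ≠ 0 ∧ h.coeff b ≠ 0 ∧ a + b = g := by
  rw [coeff_mul] at hg
  obtain ⟨a, ha, hne⟩ := Finset.exists_ne_zero_of_sum_ne_zero hg
  exact ⟨a, g - a, mem_supp.1 ha, right_ne_zero_of_mul hne, by abel⟩

/-- If right multiplication of `f ≠ 0` by a monomial equals left multiplication by `h`, then
`h` is a multiple of that monomial: compare the largest and the smallest exponents of both
sides in the lexicographic order. -/
lemma eq_mono_of_mul_eq {f h : QTorus K p q l m} (hf : f ≠ 0) {d : Expo}
    (H : f * mono d 1 = h * f) : h = mono d (h.coeff d) := by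
  have hfs : f.supp.Nonempty := by
    obtain ⟨g, hg⟩ := exists_coeff_ne_zero hf
    exact ⟨g, mem_supp.2 hg⟩
  have key : ∀ g, h.coeff g ≠ 0 → g = d := by
    intro g hg
    have hhs : h.supp.Nonempty := ⟨g, mem_supp.2 hg⟩
    have shift : ∀ a b, (h * f).coeff (a + b) ≠ 0 → (a + b - d) ∈ f.supp := by
      intro a b hab
      rw [← H, coeff_mul_mono] at hab
      exact mem_supp.2 (left_ne_zero_of_mul (left_ne_zero_of_mul hab))
    apply toLex.injective
    apply le_antisymm
    · obtain ⟨a, ha, hamax⟩ := Finset.exists_max_image h.supp toLex hhs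
      obtain ⟨b, hb, hbmax⟩ := Finset.exists_max_image f.supp toLex hfs
      have hc : (h * f).coeff (a + b) ≠ 0 := by
        rw [coeff_mul_of_unique]
        · exact mul_ne_zero (mul_ne_zero (mem_supp.1 ha) (Units.ne_zero _)) (mem_supp.1 hb)
        · intro u v hu hv huv
          have huv' : toLex u + toLex v = toLex a + toLex b := congrArg toLex huv
          exact toLex.injective ((add_eq_add_iff_eq_and_eq (hamax u (mem_supp.2 hu))
            (hbmax v (mem_supp.2 hv))).1 huv').1
      have h1 : toLex a + toLex b - toLex d ≤ toLex b := hbmax _ (shift a b hc)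
      have h2 : toLex a ≤ toLex d := by
        rw [add_sub_right_comm] at h1
        simpa using h1
      exact (hamax g (mem_supp.2 hg)).trans h2
    · obtain ⟨a, ha, hamin⟩ := Finset.exists_min_image h.supp toLex hhs
      obtain ⟨b, hb, hbmin⟩ := Finset.exists_min_image f.supp toLex hfs
      have hc : (h * f).coeff (a + b) ≠ 0 := by
        rw [coeff_mul_of_unique]
        · exact mul_ne_zero (mul_ne_zero (mem_supp.1 ha) (Units.ne_zero _)) (mem_supp.1 hb)
        · intro u v hu hv huv
          have huv' : toLex a + toLex b = toLex u + toLex v := congrArg toLex huv.symm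
          exact (toLex.injective ((add_eq_add_iff_eq_and_eq (hamin u (mem_supp.2 hu))
            (hbmin v (mem_supp.2 hv))).1 huv').1).symm
      have h1 : toLex b ≤ toLex a + toLex b - toLex d := hbmin _ (shift a b hc)
      have h2 : toLex d ≤ toLex a := by
        rw [add_sub_right_comm] at h1
        simpa using h1
      exact h2.trans (hamin g (mem_supp.2 hg))
  ext g
  rw [coeff_mono]
  split_ifs with hgd
  · rw [hgd]
  · by_contra hne
    exact hgd (key g hne).symm

/-- Exponents of an element that commutes up to the scalar `γ` with the monomial `e_d`. -/
lemma bichar_eq_of_commute {f : QTorus K p q l m} {d : Expo} {u γ : K} (hu : u ≠ 0)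
    (H : f * mono d u = γ • (mono d u * f)) {g : Expo} (hg : f.coeff g ≠ 0) :
    (bichar p q l m g d : K) = γ * bichar p q l m d g := by
  have h := congrArg (fun e => e.coeff (g + d)) H
  simp only [coeff_mul_mono, coeff_smul, coeff_mono_mul, add_sub_cancel_right] at h
  have h2 : u * f.coeff g ≠ 0 := mul_ne_zero hu hg
  apply mul_left_cancel₀ h2
  linear_combination h

end QTorus

end Torus

/-! ### Generators and the universal property -/

namespace ExtWeyl

section Basic

variable {K : Type*} [Field K] {p q l m : K}

/-- The four generators `x, y, s, t`, indexed by `Fin 4`. -/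
def gen (p q l m : K) (i : Fin 4) : ExtWeyl K p q l m :=
  RingQuot.mkAlgHom K (ExtWeylRel K p q l m) (ι K i)

local notation "𝐱" => gen p q l m 0
local notation "𝐲" => gen p q l m 1
local notation "𝐬" => gen p q l m 2
local notation "𝐭" => gen p q l m 3

lemma rel_weyl : 𝐱 * 𝐲 - p • (𝐲 * 𝐱) = 1 := by
  simpa [gen] using RingQuot.mkAlgHom_rel K (ExtWeylRel.weyl (p := p) (q := q) (lam := l) (mu := m))

lemma rel_xy : 𝐱 * 𝐲 = p • (𝐲 * 𝐱) + 1 := by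
  rw [← rel_weyl]; abel

lemma rel_st : 𝐬 * 𝐭 = q • (𝐭 * 𝐬) := by
  simpa [gen] using RingQuot.mkAlgHom_rel K (ExtWeylRel.st (p := p) (q := q) (lam := l) (mu := m))

lemma rel_sx : 𝐬 * 𝐱 = l • (𝐱 * 𝐬) := by
  simpa [gen] using RingQuot.mkAlgHom_rel K (ExtWeylRel.sx (p := p) (q := q) (lam := l) (mu := m))

lemma rel_sy : 𝐬 * 𝐲 = l⁻¹ • (𝐲 * 𝐬) := by
  simpa [gen] using RingQuot.mkAlgHom_rel K (ExtWeylRel.sy (p := p) (q := q) (lam := l) (mu := m))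

lemma rel_tx : 𝐭 * 𝐱 = m • (𝐱 * 𝐭) := by
  simpa [gen] using RingQuot.mkAlgHom_rel K (ExtWeylRel.tx (p := p) (q := q) (lam := l) (mu := m))

lemma rel_ty : 𝐭 * 𝐲 = m⁻¹ • (𝐲 * 𝐭) := by
  simpa [gen] using RingQuot.mkAlgHom_rel K (ExtWeylRel.ty (p := p) (q := q) (lam := l) (mu := m))

/-- The algebra map out of the extended quantized Weyl algebra determined by a family
satisfying the defining relations. -/
def lift {B : Type*} [Ring B] [Algebra K B] (v : Fin 4 → B)
    (h1 : v 0 * v 1 - p • (v 1 * v 0) = 1) (h2 : v 2 * v 3 = q • (v 3 * v 2))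
    (h3 : v 2 * v 0 = l • (v 0 * v 2)) (h4 : v 2 * v 1 = l⁻¹ • (v 1 * v 2))
    (h5 : v 3 * v 0 = m • (v 0 * v 3)) (h6 : v 3 * v 1 = m⁻¹ • (v 1 * v 3)) :
    ExtWeyl K p q l m →ₐ[K] B :=
  RingQuot.liftAlgHom K ⟨FreeAlgebra.lift K v, by
    intro a b hab
    cases hab <;> simp <;> assumption⟩

lemma lift_gen {B : Type*} [Ring B] [Algebra K B] (v : Fin 4 → B) (h1 h2 h3 h4 h5 h6) (i : Fin 4) :
    lift (p := p) (q := q) (l := l) (m := m) v h1 h2 h3 h4 h5 h6 (gen p q l m i) = v i := by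
  simp [lift, gen]

lemma hom_ext {B : Type*} [Ring B] [Algebra K B] {f g : ExtWeyl K p q l m →ₐ[K] B}
    (h : ∀ i, f (gen p q l m i) = g (gen p q l m i)) : f = g := by
  apply RingQuot.ringQuot_ext'
  apply FreeAlgebra.hom_ext
  funext i
  exact h i

@[elab_as_elim]
lemma induction_on {P : ExtWeyl K p q l m → Prop} (a : ExtWeyl K p q l m)
    (hC : ∀ r : K, P (algebraMap K _ r)) (hgen : ∀ i, P (gen p q l m i))
    (hmul : ∀ a b, P a → P b → P (a * b)) (hadd : ∀ a b, P a → P b → P (a + b)) : P a := by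
  obtain ⟨a, rfl⟩ := RingQuot.mkAlgHom_surjective K (ExtWeylRel K p q l m) a
  induction a using FreeAlgebra.induction with
  | grade0 r => simpa using hC r
  | grade1 i => exact hgen i
  | mul a b ha hb => rw [map_mul]; exact hmul _ _ ha hb
  | add a b ha hb => rw [map_add]; exact hadd _ _ ha hb

/-- The normal element `z = xy - yx`. -/
def zel (p q l m : K) : ExtWeyl K p q l m :=
  gen p q l m 0 * gen p q l m 1 - gen p q l m 1 * gen p q l m 0

local notation "𝐳" => zel p q l m

lemma zel_eq : 𝐳 = (p - 1) • (𝐲 * 𝐱) + 1 := by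
  rw [zel, rel_xy]; module

lemma x_zel : 𝐱 * 𝐳 = p • (𝐳 * 𝐱) := by
  have h : 𝐱 * (𝐲 * 𝐱) = p • (𝐲 * 𝐱 * 𝐱) + 𝐱 := by
    rw [← mul_assoc, rel_xy, add_mul, one_mul, smul_mul_assoc]
  rw [zel_eq, mul_add, add_mul, mul_smul_comm, h, mul_one, one_mul, smul_mul_assoc]
  module

lemma zel_y : 𝐳 * 𝐲 = p • (𝐲 * 𝐳) := by
  have h : 𝐲 * 𝐱 * 𝐲 = p • (𝐲 * (𝐲 * 𝐱)) + 𝐲 := by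
    rw [mul_assoc, rel_xy, mul_add, mul_one, mul_smul_comm]
  rw [zel_eq, mul_add, add_mul, mul_smul_comm, smul_mul_assoc, h, mul_one, one_mul]
  module

lemma s_zel (hl : l ≠ 0) : 𝐬 * 𝐳 = 𝐳 * 𝐬 := by
  have h : 𝐬 * (𝐲 * 𝐱) = 𝐲 * 𝐱 * 𝐬 := by
    rw [← mul_assoc, rel_sy, smul_mul_assoc, mul_assoc, rel_sx, mul_smul_comm, smul_smul,
      inv_mul_cancel₀ hl, one_smul, mul_assoc]
  rw [zel_eq, mul_add, add_mul, mul_smul_comm, smul_mul_assoc, h, mul_one, one_mul]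

lemma t_zel (hm : m ≠ 0) : 𝐭 * 𝐳 = 𝐳 * 𝐭 := by
  have h : 𝐭 * (𝐲 * 𝐱) = 𝐲 * 𝐱 * 𝐭 := by
    rw [← mul_assoc, rel_ty, smul_mul_assoc, mul_assoc, rel_tx, mul_smul_comm, smul_smul,
      inv_mul_cancel₀ hm, one_smul, mul_assoc]
  rw [zel_eq, mul_add, add_mul, mul_smul_comm, smul_mul_assoc, h, mul_one, one_mul]

/-! ### Normal elements -/

/-- One half of normality: `n A ⊆ A n`. -/
def IsNormalEl {A : Type*} [Mul A] (n : A) : Prop := ∀ a, ∃ b, n * a = b * n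

lemma isNormalEl_of_gen (n : ExtWeyl K p q l m)
    (h : ∀ i, ∃ γ : K, n * gen p q l m i = γ • (gen p q l m i * n)) : IsNormalEl n := by
  intro a
  induction a using induction_on with
  | hC r => exact ⟨algebraMap K _ r, (Algebra.commutes r n).symm⟩
  | hgen i =>
    obtain ⟨γ, hγ⟩ := h i
    exact ⟨γ • gen p q l m i, by rw [hγ, smul_mul_assoc]⟩
  | hmul a b ha hb =>
    obtain ⟨a', ha'⟩ := ha
    obtain ⟨b', hb'⟩ := hb
    exact ⟨a' * b', by rw [← mul_assoc, ha', mul_assoc, hb', mul_assoc]⟩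
  | hadd a b ha hb =>
    obtain ⟨a', ha'⟩ := ha
    obtain ⟨b', hb'⟩ := hb
    exact ⟨a' + b', by rw [mul_add, ha', hb', add_mul]⟩

lemma eq_inv_smul {r : K} (hr : r ≠ 0) {a b : ExtWeyl K p q l m}
    (h : a = r • b) : b = r⁻¹ • a := by
  rw [h, smul_smul, inv_mul_cancel₀ hr, one_smul]

lemma isNormalEl_zel (hp : p ≠ 0) (hl : l ≠ 0) (hm : m ≠ 0) : IsNormalEl 𝐳 := by
  apply isNormalEl_of_gen
  intro i
  fin_cases i
  · exact ⟨p⁻¹, eq_inv_smul hp x_zel⟩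
  · exact ⟨p, zel_y⟩
  · exact ⟨1, by rw [one_smul]; exact (s_zel hl).symm⟩
  · exact ⟨1, by rw [one_smul]; exact (t_zel hm).symm⟩

lemma isNormalEl_s : IsNormalEl 𝐬 := by
  apply isNormalEl_of_gen
  intro i
  fin_cases i
  · exact ⟨l, rel_sx⟩
  · exact ⟨l⁻¹, rel_sy⟩
  · exact ⟨1, by rw [one_smul]; rfl⟩
  · exact ⟨q, rel_st⟩

lemma isNormalEl_t (hq : q ≠ 0) : IsNormalEl 𝐭 := by
  apply isNormalEl_of_gen
  intro i
  fin_cases i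
  · exact ⟨m, rel_tx⟩
  · exact ⟨m⁻¹, rel_ty⟩
  · exact ⟨q⁻¹, eq_inv_smul hq rel_st⟩
  · exact ⟨1, by rw [one_smul]; rfl⟩

lemma IsNormalEl.map {A B : Type*} [Ring A] [Ring B] [Algebra K A] [Algebra K B]
    (φ : A ≃ₐ[K] B) {n : A} (hn : IsNormalEl n) : IsNormalEl (φ n) := by
  intro b
  obtain ⟨a, ha⟩ := hn (φ.symm b)
  refine ⟨φ a, ?_⟩
  have := congrArg φ ha
  simpa using this

/-! ### The isomorphisms realizing the four conditions -/

/-- Exchanging `s` and `t`. -/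
def swapHom (p q l m : K) (hq : q ≠ 0) : ExtWeyl K p q l m →ₐ[K] ExtWeyl K p q⁻¹ m l :=
  lift ![gen p q⁻¹ m l 0, gen p q⁻¹ m l 1, gen p q⁻¹ m l 3, gen p q⁻¹ m l 2]
    rel_weyl
    (by
      have h := eq_inv_smul (inv_ne_zero hq) (rel_st (p := p) (q := q⁻¹) (l := m) (m := l))
      simpa using h)
    rel_tx rel_ty rel_sx rel_sy

/-- Exchanging `x` and `y`, up to scalars `a`, `b`. -/
def flipHom (p q l m a b : K) (hp : p ≠ 0) (hab : a * b = -p⁻¹) :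
    ExtWeyl K p q l m →ₐ[K] ExtWeyl K p⁻¹ q l⁻¹ m⁻¹ :=
  lift ![a • gen p⁻¹ q l⁻¹ m⁻¹ 1, b • gen p⁻¹ q l⁻¹ m⁻¹ 0,
      gen p⁻¹ q l⁻¹ m⁻¹ 2, gen p⁻¹ q l⁻¹ m⁻¹ 3]
    (by
      have h := rel_xy (p := p⁻¹) (q := q) (l := l⁻¹) (m := m⁻¹)
      have hab' : p * a * b = -1 := by rw [mul_assoc, hab]; field_simp
      simp only [Matrix.cons_val, mul_smul_comm, smul_mul_assoc, h]
      match_scalars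
      · field_simp
        ring
      · linear_combination -hab')
    rel_st
    (by
      have h := rel_sy (p := p⁻¹) (q := q) (l := l⁻¹) (m := m⁻¹)
      rw [inv_inv] at h
      simp only [Matrix.cons_val, mul_smul_comm, smul_mul_assoc, h]
      module)
    (by
      have h := rel_sx (p := p⁻¹) (q := q) (l := l⁻¹) (m := m⁻¹)
      simp only [Matrix.cons_val, mul_smul_comm, smul_mul_assoc, h]
      module)
    (by
      have h := rel_ty (p := p⁻¹) (q := q) (l := l⁻¹) (m := m⁻¹)
      rw [inv_inv] at h
      simp only [Matrix.cons_val, mul_smul_comm, smul_mul_assoc, h]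
      module)
    (by
      have h := rel_tx (p := p⁻¹) (q := q) (l := l⁻¹) (m := m⁻¹)
      simp only [Matrix.cons_val, mul_smul_comm, smul_mul_assoc, h]
      module)

lemma swapHom_gen (hq : q ≠ 0) (i : Fin 4) : swapHom p q l m hq (gen p q l m i) =
    (![gen p q⁻¹ m l 0, gen p q⁻¹ m l 1, gen p q⁻¹ m l 3, gen p q⁻¹ m l 2] : Fin 4 → _) i :=
  lift_gen ..

lemma flipHom_gen (a b : K) (hp : p ≠ 0) (hab : a * b = -p⁻¹) (i : Fin 4) :
    flipHom p q l m a b hp hab (gen p q l m i) =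
    (![a • gen p⁻¹ q l⁻¹ m⁻¹ 1, b • gen p⁻¹ q l⁻¹ m⁻¹ 0,
      gen p⁻¹ q l⁻¹ m⁻¹ 2, gen p⁻¹ q l⁻¹ m⁻¹ 3] : Fin 4 → _) i :=
  lift_gen ..

/-- The swap isomorphism, with the target parameters characterized by equations so that it can
also be used in the reverse direction. -/
lemma exists_swapEquiv (hq : q ≠ 0) {q' : K} (h : q' = q⁻¹) :
    ∃ e : ExtWeyl K p q l m ≃ₐ[K] ExtWeyl K p q' m l,
      e 𝐱 = gen p q' m l 0 ∧ e 𝐲 = gen p q' m l 1 ∧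
      e 𝐬 = gen p q' m l 3 ∧ e 𝐭 = gen p q' m l 2 := by
  have aux : ∀ {q₁ q₂ : K} (_ : q₁ ≠ 0) (_ : q₂ = q₁⁻¹) (l₁ m₁ : K),
      ∃ f : ExtWeyl K p q₁ l₁ m₁ →ₐ[K] ExtWeyl K p q₂ m₁ l₁, ∀ i, f (gen p q₁ l₁ m₁ i) =
      (![gen p q₂ m₁ l₁ 0, gen p q₂ m₁ l₁ 1, gen p q₂ m₁ l₁ 3, gen p q₂ m₁ l₁ 2] : Fin 4 → _) i := by
    rintro q₁ q₂ h1 rfl l₁ m₁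
    exact ⟨swapHom p q₁ l₁ m₁ h1, swapHom_gen h1⟩
  obtain ⟨f, hf⟩ := aux hq h l m
  obtain ⟨g, hg⟩ := aux (q₁ := q') (q₂ := q) (by rw [h]; exact inv_ne_zero hq) (by rw [h, inv_inv]) m l
  refine ⟨AlgEquiv.ofAlgHom f g ?_ ?_, hf 0, hf 1, hf 2, hf 3⟩
  · apply hom_ext
    intro i
    fin_cases i <;> simp [hf, hg]
  · apply hom_ext
    intro i
    fin_cases i <;> simp [hf, hg]

lemma nonempty_flipEquiv (hp : p ≠ 0) {p' l' m' : K} (h : p' = p⁻¹) (hl : l' = l⁻¹)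
    (hm : m' = m⁻¹) : Nonempty (ExtWeyl K p q l m ≃ₐ[K] ExtWeyl K p' q l' m') := by
  have aux : ∀ {p₁ p₂ l₁ l₂ m₁ m₂ : K} (a b : K) (_ : p₁ ≠ 0) (_ : p₂ = p₁⁻¹)
      (_ : l₂ = l₁⁻¹) (_ : m₂ = m₁⁻¹) (_ : a * b = -p₂),
      ∃ f : ExtWeyl K p₁ q l₁ m₁ →ₐ[K] ExtWeyl K p₂ q l₂ m₂, ∀ i, f (gen p₁ q l₁ m₁ i) =
      (![a • gen p₂ q l₂ m₂ 1, b • gen p₂ q l₂ m₂ 0,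
        gen p₂ q l₂ m₂ 2, gen p₂ q l₂ m₂ 3] : Fin 4 → _) i := by
    rintro p₁ p₂ l₁ l₂ m₁ m₂ a b h1 rfl rfl rfl hab
    exact ⟨flipHom p₁ q l₁ m₁ a b h1 hab, flipHom_gen a b h1 hab⟩
  obtain ⟨f, hf⟩ := aux 1 (-p⁻¹) hp h hl hm (by rw [h, one_mul])
  obtain ⟨g, hg⟩ := aux (p₁ := p') (p₂ := p) (l₁ := l') (l₂ := l) (m₁ := m') (m₂ := m)
    (-p) 1 (by rw [h]; exact inv_ne_zero hp) (by rw [h, inv_inv]) (by rw [hl, inv_inv])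
    (by rw [hm, inv_inv]) (mul_one _)
  refine ⟨AlgEquiv.ofAlgHom f g ?_ ?_⟩
  · apply hom_ext
    intro i
    fin_cases i <;> simp [hf, hg, smul_smul, hp]
  · apply hom_ext
    intro i
    fin_cases i <;> simp [hf, hg, smul_smul, hp]

end Basic

end ExtWeyl

namespace ExtWeyl

/-! ### Spanning by ordered monomials -/

section Span

variable {K : Type*} [Field K] {p q l m : K}

local notation "𝐱" => gen p q l m 0
local notation "𝐲" => gen p q l m 1
local notation "𝐬" => gen p q l m 2
local notation "𝐭" => gen p q l m 3
local notation "𝐳" => zel p q l m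

/-- The ordered monomial `y^a x^b s^j t^k`, where `w = (a, b, j, k)`. -/
def pbw (p q l m : K) (w : ℕ × ℕ × ℕ × ℕ) : ExtWeyl K p q l m :=
  gen p q l m 1 ^ w.1 * (gen p q l m 0 ^ w.2.1 * (gen p q l m 2 ^ w.2.2.1 * gen p q l m 3 ^ w.2.2.2))

lemma mul_pow_of_comm {a b : ExtWeyl K p q l m} {r : K} (h : a * b = r • (b * a)) (n : ℕ) :
    a * b ^ n = r ^ n • (b ^ n * a) := by
  induction n with
  | zero => simp
  | succ n ih =>
    rw [pow_succ, ← mul_assoc, ih, smul_mul_assoc, mul_assoc, h, mul_smul_comm, smul_smul,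
      ← pow_succ, mul_assoc]

lemma x_mul_y_pow (n : ℕ) :
    ∃ r : K, 𝐱 * 𝐲 ^ (n + 1) = p ^ (n + 1) • (𝐲 ^ (n + 1) * 𝐱) + r • 𝐲 ^ n := by
  induction n with
  | zero => exact ⟨1, by simpa using rel_xy⟩
  | succ n ih =>
    obtain ⟨r, hr⟩ := ih
    refine ⟨p ^ (n + 1) + r, ?_⟩
    rw [pow_succ 𝐲 (n + 1), ← mul_assoc, hr, add_mul, smul_mul_assoc, smul_mul_assoc, mul_assoc,
      rel_xy, mul_add, mul_one, mul_smul_comm, smul_add, smul_smul, ← pow_succ, ← pow_succ,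
      ← mul_assoc]
    module

lemma gen_mul_pbw (hq : q ≠ 0) (i : Fin 4) (w : ℕ × ℕ × ℕ × ℕ) :
    gen p q l m i * pbw p q l m w ∈ Submodule.span K (Set.range (pbw p q l m)) := by
  obtain ⟨a, b, j, k⟩ := w
  have mem : ∀ w, pbw p q l m w ∈ Submodule.span K (Set.range (pbw p q l m)) :=
    fun w => Submodule.subset_span ⟨w, rfl⟩
  fin_cases i
  · change 𝐱 * pbw p q l m (a, b, j, k) ∈ _
    rcases a with _ | a
    · convert mem (0, b + 1, j, k) using 1
      simp only [pbw, pow_zero, one_mul, pow_succ', mul_assoc]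
    · obtain ⟨r, hr⟩ := x_mul_y_pow (p := p) (q := q) (l := l) (m := m) a
      have : 𝐱 * pbw p q l m (a + 1, b, j, k) =
          p ^ (a + 1) • pbw p q l m (a + 1, b + 1, j, k) + r • pbw p q l m (a, b, j, k) := by
        simp only [pbw]
        rw [← mul_assoc, hr, add_mul, smul_mul_assoc, smul_mul_assoc, pow_succ' 𝐱 b]
        simp only [mul_assoc]
      rw [this]
      exact add_mem (Submodule.smul_mem _ _ (mem _)) (Submodule.smul_mem _ _ (mem _))
  · convert mem (a + 1, b, j, k) using 1
    simp only [pbw, pow_succ', mul_assoc]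
    rfl
  · change 𝐬 * pbw p q l m (a, b, j, k) ∈ _
    have : 𝐬 * pbw p q l m (a, b, j, k) = (l⁻¹ ^ a * l ^ b) • pbw p q l m (a, b, j + 1, k) := by
      simp only [pbw]
      rw [← mul_assoc, mul_pow_of_comm rel_sy, smul_mul_assoc, mul_assoc, ← mul_assoc 𝐬,
        mul_pow_of_comm rel_sx, smul_mul_assoc, mul_smul_comm, smul_smul, mul_assoc _ 𝐬,
        ← mul_assoc 𝐬, ← pow_succ']
    rw [this]
    exact Submodule.smul_mem _ _ (mem _)
  · change 𝐭 * pbw p q l m (a, b, j, k) ∈ _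
    have hts : 𝐭 * 𝐬 = q⁻¹ • (𝐬 * 𝐭) := eq_inv_smul hq rel_st
    have : 𝐭 * pbw p q l m (a, b, j, k) =
        (m⁻¹ ^ a * m ^ b * q⁻¹ ^ j) • pbw p q l m (a, b, j, k + 1) := by
      simp only [pbw]
      rw [← mul_assoc, mul_pow_of_comm rel_ty, smul_mul_assoc, mul_assoc, ← mul_assoc 𝐭,
        mul_pow_of_comm rel_tx, smul_mul_assoc, mul_smul_comm, smul_smul, mul_assoc _ 𝐭,
        ← mul_assoc 𝐭, mul_pow_of_comm hts, smul_mul_assoc, mul_smul_comm, mul_smul_comm,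
        smul_smul, mul_assoc _ 𝐭, ← pow_succ']
    rw [this]
    exact Submodule.smul_mem _ _ (mem _)

lemma mem_span_pbw (hq : q ≠ 0) (a : ExtWeyl K p q l m) :
    a ∈ Submodule.span K (Set.range (pbw p q l m)) := by
  have key : ∀ v ∈ Submodule.span K (Set.range (pbw p q l m)),
      a * v ∈ Submodule.span K (Set.range (pbw p q l m)) := by
    induction a using induction_on with
    | hC r =>
      intro v hv
      rw [← Algebra.smul_def]
      exact Submodule.smul_mem _ _ hv
    | hgen i =>
      intro v hv
      induction hv using Submodule.span_induction with
      | mem v hv =>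
        obtain ⟨w, rfl⟩ := hv
        exact gen_mul_pbw hq i w
      | zero => rw [mul_zero]; exact zero_mem _
      | add u v _ _ hu hv => rw [mul_add]; exact add_mem hu hv
      | smul r v _ hv => rw [mul_smul_comm]; exact Submodule.smul_mem _ _ hv
    | hmul a b ha hb => intro v hv; rw [mul_assoc]; exact ha _ (hb _ hv)
    | hadd a b ha hb => intro v hv; rw [add_mul]; exact add_mem (ha _ hv) (hb _ hv)
  have := key 1 (Submodule.subset_span ⟨(0, 0, 0, 0), by simp [pbw]⟩)
  rwa [mul_one] at this

end Span

/-! ### The embedding into the quantum torus -/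

section Embedding

open QTorus

variable {K : Type*} [Field K] {p q l m : Kˣ}

local notation "A" => ExtWeyl K (p : K) (q : K) (l : K) (m : K)
local notation "𝐱" => gen (p : K) (q : K) (l : K) (m : K) 0
local notation "𝐲" => gen (p : K) (q : K) (l : K) (m : K) 1
local notation "𝐬" => gen (p : K) (q : K) (l : K) (m : K) 2
local notation "𝐭" => gen (p : K) (q : K) (l : K) (m : K) 3
local notation "𝐳" => zel (p : K) (q : K) (l : K) (m : K)

lemma vec_zero : (![0, 0, 0, 0] : Expo) = 0 := by
  ext i
  fin_cases i <;> rfl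

/-- The image of `y` in the quantum torus, namely `(p - 1)⁻¹ (z - 1) x⁻¹`. -/
def yTorus (p q l m : Kˣ) : QTorus K p q l m :=
  mono ![-1, 1, 0, 0] ((p : K) - 1)⁻¹ - mono ![-1, 0, 0, 0] ((p : K) - 1)⁻¹

/-- The algebra map `A → QTorus` with `x ↦ x`, `y ↦ (p - 1)⁻¹ (z - 1) x⁻¹`, `s ↦ s`, `t ↦ t`. -/
def toTorus (hp : (p : K) ≠ 1) : A →ₐ[K] QTorus K p q l m :=
  lift ![mono ![1, 0, 0, 0] 1, yTorus p q l m, mono ![0, 0, 1, 0] 1, mono ![0, 0, 0, 1] 1]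
    (by
      have h : (p : K) - 1 ≠ 0 := sub_ne_zero.2 hp
      simp [yTorus, mul_sub, sub_mul, smul_sub, bichar, one_def, vec_zero]
      ext g
      simp only [coeff_sub, coeff_mono]
      split_ifs <;> field_simp <;> ring)
    (by simp [bichar])
    (by simp [bichar])
    (by simp [yTorus, mul_sub, sub_mul, smul_sub, bichar, mul_comm])
    (by simp [bichar])
    (by simp [yTorus, mul_sub, sub_mul, smul_sub, bichar, mul_comm])

variable (hp : (p : K) ≠ 1)

lemma toTorus_x : toTorus hp 𝐱 = (mono ![1, 0, 0, 0] 1 : QTorus K p q l m) := lift_gen ..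
lemma toTorus_y : toTorus hp 𝐲 = yTorus p q l m := lift_gen ..
lemma toTorus_s : toTorus hp 𝐬 = (mono ![0, 0, 1, 0] 1 : QTorus K p q l m) := lift_gen ..
lemma toTorus_t : toTorus hp 𝐭 = (mono ![0, 0, 0, 1] 1 : QTorus K p q l m) := lift_gen ..

lemma toTorus_z : toTorus hp 𝐳 = (mono ![0, 1, 0, 0] 1 : QTorus K p q l m) := by
  have h : (p : K) - 1 ≠ 0 := sub_ne_zero.2 hp
  rw [zel_eq, map_add, map_smul, map_mul, map_one, toTorus_x, toTorus_y]
  simp [yTorus, sub_mul, smul_sub, bichar, one_def, h, vec_zero]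

lemma mono_pow (d : Expo) {u₀ : K} (hu₀ : u₀ ≠ 0) (n : ℕ) :
    ∃ u : K, u ≠ 0 ∧ (mono d u₀ : QTorus K p q l m) ^ n = mono (n • d) u := by
  induction n with
  | zero => exact ⟨1, one_ne_zero, by simp [one_def]⟩
  | succ n ih =>
    obtain ⟨u, hu, h⟩ := ih
    refine ⟨u * u₀ * bichar p q l m (n • d) d,
      mul_ne_zero (mul_ne_zero hu hu₀) (Units.ne_zero _), ?_⟩
    rw [pow_succ, h, mono_mul_mono, succ_nsmul]

/-- The ordered monomial `y^a x^b s^j t^k` maps to an element whose unique term of top degree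
(at least `a`) in `z` has exponent `(b - a, a, j, k)`. -/
lemma toTorus_pbw (a b j k : ℕ) :
    (toTorus hp (pbw (p : K) q l m (a, b, j, k))).coeff ![(b : ℤ) - a, a, j, k] ≠ 0 ∧
    ∀ g, (a : ℤ) ≤ g 1 → (toTorus hp (pbw (p : K) q l m (a, b, j, k))).coeff g ≠ 0 →
      g = ![(b : ℤ) - a, a, j, k] := by
  induction a with
  | zero =>
    obtain ⟨u, hu, h1⟩ := mono_pow (p := p) (q := q) (l := l) (m := m) ![1, 0, 0, 0] one_ne_zero b
    obtain ⟨v, hv, h2⟩ := mono_pow (p := p) (q := q) (l := l) (m := m) ![0, 0, 1, 0] one_ne_zero j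
    obtain ⟨w, hw, h3⟩ := mono_pow (p := p) (q := q) (l := l) (m := m) ![0, 0, 0, 1] one_ne_zero k
    have he : b • ![1, 0, 0, 0] + (j • ![0, 0, 1, 0] + k • ![0, 0, 0, 1]) =
        (![(b : ℤ) - (0 : ℕ), (0 : ℕ), j, k] : Expo) := by
      ext i
      fin_cases i <;> simp
    have : ∃ r : K, r ≠ 0 ∧ toTorus hp (pbw (p : K) q l m (0, b, j, k)) =
        mono ![(b : ℤ) - (0 : ℕ), (0 : ℕ), j, k] r := by
      have heq : toTorus hp (pbw (p : K) q l m (0, b, j, k)) =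
          mono (b • ![1, 0, 0, 0]) u * (mono (j • ![0, 0, 1, 0]) v * mono (k • ![0, 0, 0, 1]) w) := by
        simp only [pbw, pow_zero, one_mul, map_mul, map_pow, toTorus_x, toTorus_s, toTorus_t]
        rw [h1, h2, h3]
      rw [mono_mul_mono, mono_mul_mono, he] at heq
      exact ⟨_, mul_ne_zero (mul_ne_zero hu (mul_ne_zero (mul_ne_zero hv hw) (Units.ne_zero _)))
          (Units.ne_zero _), heq⟩
    obtain ⟨r, hr, h⟩ := this
    rw [h]
    refine ⟨by rwa [coeff_mono, if_pos rfl], fun g _ hg => ?_⟩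
    rw [coeff_mono] at hg
    by_contra hne
    rw [if_neg (Ne.symm hne)] at hg
    exact hg rfl
  | succ a ih =>
    obtain ⟨ih1, ih2⟩ := ih
    have hκ : ((p : K) - 1)⁻¹ ≠ 0 := inv_ne_zero (sub_ne_zero.2 hp)
    have hmul : toTorus hp (pbw (p : K) q l m (a + 1, b, j, k)) =
        yTorus p q l m * toTorus hp (pbw (p : K) q l m (a, b, j, k)) := by
      rw [← toTorus_y hp, ← map_mul]
      simp only [pbw, pow_succ', mul_assoc]
    generalize toTorus hp (pbw (p : K) q l m (a, b, j, k)) = f at *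
    have hsh : (![(b : ℤ) - a, a, j, k] : Expo) + ![-1, 1, 0, 0] =
        ![(b : ℤ) - (a + 1 : ℕ), (a + 1 : ℕ), j, k] := by
      ext i
      fin_cases i <;> simp
      ring
    -- in degree at least `a + 1` in `z`, only the term `z x⁻¹` of `y` contributes
    have hco : ∀ g : Expo, ((a + 1 : ℕ) : ℤ) ≤ g 1 →
        (yTorus p q l m * f).coeff g = ((p : K) - 1)⁻¹ *
          bichar p q l m ![-1, 1, 0, 0] (g - ![-1, 1, 0, 0]) * f.coeff (g - ![-1, 1, 0, 0]) := by
      intro g hg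
      push_cast at hg
      have h0 : f.coeff (g - ![-1, 0, 0, 0]) = 0 := by
        by_contra hne
        have h1 := ih2 _ (by simp; omega) hne
        have h2 := congrFun h1 1
        simp at h2
        omega
      rw [yTorus, sub_mul, coeff_sub, coeff_mono_mul, coeff_mono_mul, h0, mul_zero, sub_zero]
    rw [hmul]
    refine ⟨?_, fun g hg hne => ?_⟩
    · rw [hco _ (by simp), ← hsh, add_sub_cancel_right]
      exact mul_ne_zero (mul_ne_zero hκ (Units.ne_zero _)) ih1
    · rw [hco g hg] at hne
      have h1 := ih2 _ (by push_cast at hg; simp; omega) (right_ne_zero_of_mul hne)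
      rw [← hsh, ← h1, sub_add_cancel]

/-- A nonzero element of `A` has a term in the torus whose exponents `g` satisfy
`0 ≤ g 0 + g 1`. Besides injectivity of the embedding this shows that `x⁻¹` is not in its range. -/
lemma exists_coeff_toTorus {a : A} (ha : a ≠ 0) :
    ∃ g, (toTorus hp a).coeff g ≠ 0 ∧ 0 ≤ g 0 + g 1 := by
  obtain ⟨c, rfl⟩ := Finsupp.mem_span_range_iff_exists_finsupp.1 (mem_span_pbw q.ne_zero a)
  have hc : c.support.Nonempty := by
    rw [Finsupp.support_nonempty_iff]
    rintro rfl
    simp at ha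
  obtain ⟨⟨a, b, j, k⟩, hw, hmax⟩ := Finset.exists_max_image c.support (fun w => w.1) hc
  refine ⟨![(b : ℤ) - a, a, j, k], ?_, by simp⟩
  rw [Finsupp.sum, map_sum, coeff_sum, Finset.sum_eq_single (a, b, j, k)]
  · rw [map_smul, coeff_smul]
    exact mul_ne_zero (Finsupp.mem_support_iff.1 hw) (toTorus_pbw hp a b j k).1
  · rintro ⟨a', b', j', k'⟩ hw' hne
    rw [map_smul, coeff_smul]
    by_contra h
    have h1 := (toTorus_pbw hp a' b' j' k').2 ![(b : ℤ) - a, a, j, k]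
      (by simpa using hmax _ hw') (right_ne_zero_of_mul h)
    have e0 := congrFun h1 0
    have e1 := congrFun h1 1
    have e2 := congrFun h1 2
    have e3 := congrFun h1 3
    simp at e0 e1 e2 e3
    apply hne
    simp only [Prod.mk.injEq]
    omega
  · intro h
    exact absurd hw h

lemma toTorus_injective : Function.Injective (toTorus (q := q) (l := l) (m := m) hp) := by
  rw [injective_iff_map_eq_zero]
  intro a ha
  by_contra hne
  obtain ⟨g, hg, _⟩ := exists_coeff_toTorus hp hne
  rw [ha] at hg
  exact hg rfl

lemma coeff_toTorus_nonneg (a : A) : ∀ g, (toTorus hp a).coeff g ≠ 0 →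
    0 ≤ g 1 ∧ 0 ≤ g 2 ∧ 0 ≤ g 3 := by
  have hmono : ∀ (d : Expo) (u : K), 0 ≤ d 1 ∧ 0 ≤ d 2 ∧ 0 ≤ d 3 →
      ∀ g, (mono d u : QTorus K p q l m).coeff g ≠ 0 → 0 ≤ g 1 ∧ 0 ≤ g 2 ∧ 0 ≤ g 3 := by
    intro d u hd g hg
    rw [coeff_mono] at hg
    by_cases h : d = g
    · rwa [← h]
    · rw [if_neg h] at hg
      exact absurd rfl hg
  have hadd : ∀ f h : QTorus K p q l m, ∀ g, (f + h).coeff g ≠ 0 →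
      f.coeff g ≠ 0 ∨ h.coeff g ≠ 0 := by
    intro f h g hg
    by_contra! H
    exact hg (by rw [coeff_add, H.1, H.2, add_zero])
  induction a using induction_on with
  | hC r =>
    rw [AlgHom.commutes, algebraMap_eq]
    exact hmono _ _ (by simp)
  | hgen i =>
    fin_cases i
    · change ∀ g, (toTorus hp 𝐱).coeff g ≠ 0 → _
      rw [toTorus_x]
      exact hmono _ _ (by simp)
    · change ∀ g, (toTorus hp 𝐲).coeff g ≠ 0 → _
      intro g hg
      rw [toTorus_y, yTorus, coeff_sub] at hg
      by_cases h : (mono ![-1, 1, 0, 0] ((p : K) - 1)⁻¹ : QTorus K p q l m).coeff g = 0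
      · rw [h, zero_sub, neg_ne_zero] at hg
        exact hmono _ _ (by simp) g hg
      · exact hmono _ _ (by simp) g h
    · change ∀ g, (toTorus hp 𝐬).coeff g ≠ 0 → _
      rw [toTorus_s]
      exact hmono _ _ (by simp)
    · change ∀ g, (toTorus hp 𝐭).coeff g ≠ 0 → _
      rw [toTorus_t]
      exact hmono _ _ (by simp)
  | hmul a b ha hb =>
    intro g hg
    rw [map_mul] at hg
    obtain ⟨u, v, hu, hv, rfl⟩ := support_mul hg
    have h1 := ha u hu
    have h2 := hb v hv
    simp only [Pi.add_apply]
    omega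
  | hadd a b ha hb =>
    intro g hg
    rw [map_add] at hg
    rcases hadd _ _ g hg with h | h
    · exact ha g h
    · exact hb g h

end Embedding

end ExtWeyl

namespace ExtWeyl

/-! ### Classification of normal elements -/

section Normal

open QTorus

variable {K : Type*} [Field K] {p q l m : Kˣ}

local notation "A" => ExtWeyl K (p : K) (q : K) (l : K) (m : K)
local notation "𝐱" => gen (p : K) (q : K) (l : K) (m : K) 0
local notation "𝐲" => gen (p : K) (q : K) (l : K) (m : K) 1
local notation "𝐬" => gen (p : K) (q : K) (l : K) (m : K) 2
local notation "𝐭" => gen (p : K) (q : K) (l : K) (m : K) 3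
local notation "𝐳" => zel (p : K) (q : K) (l : K) (m : K)

lemma zpow_eq_zero_of_not_root {r : Kˣ} (hr : ∀ n : ℕ, 0 < n → (r : K) ^ n ≠ 1) {n : ℤ}
    (h : r ^ n = 1) : n = 0 := by
  by_contra hn
  have hpos : 0 < n.natAbs := Int.natAbs_pos.2 hn
  apply hr n.natAbs hpos
  have : r ^ n.natAbs = 1 := by
    rcases Int.natAbs_eq n with h' | h' <;> rw [h'] at h
    · simpa using h
    · simpa using h
  rw [← Units.val_pow_eq_pow_val, this, Units.val_one]

lemma zpow_inj_of_not_root {r : Kˣ} (hr : ∀ n : ℕ, 0 < n → (r : K) ^ n ≠ 1) {a b : ℤ}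
    (h : r ^ a = r ^ b) : a = b := by
  have : r ^ (a - b) = 1 := by rw [zpow_sub, h, mul_inv_cancel]
  have := zpow_eq_zero_of_not_root hr this
  omega

lemma ne_one_of_not_root {r : K} (hr : ∀ n : ℕ, 0 < n → r ^ n ≠ 1) : r ≠ 1 := by
  simpa using hr 1 one_pos

variable (hp : (p : K) ≠ 1)

/-- Commutation of a normal element with an element that becomes a monomial in the torus. -/
lemma IsNormalEl.exists_bichar {n : A} (h0 : n ≠ 0) (hn : IsNormalEl n) {a : A} {d : Expo}
    (ha : toTorus hp a = mono d 1) : ∃ γ : K, ∀ g, (toTorus hp n).coeff g ≠ 0 →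
      (bichar p q l m g d : K) = γ * bichar p q l m d g := by
  obtain ⟨b, hb⟩ := hn a
  have hf : toTorus hp n ≠ 0 := fun h => h0 (toTorus_injective hp (by rw [h, map_zero]))
  have h1 := congrArg (toTorus hp) hb
  rw [map_mul, map_mul, ha] at h1
  refine ⟨(toTorus hp b).coeff d, fun g hg => bichar_eq_of_commute one_ne_zero ?_ hg⟩
  have h2 := eq_mono_of_mul_eq hf h1
  rw [h1]
  conv_lhs => rw [h2]
  rw [← smul_mul_assoc, smul_mono, mul_one]

lemma IsNormalEl.exists_mono (hpr : ∀ n : ℕ, 0 < n → (p : K) ^ n ≠ 1)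
    (hqr : ∀ n : ℕ, 0 < n → (q : K) ^ n ≠ 1) {n : A} (h0 : n ≠ 0) (hn : IsNormalEl n) :
    ∃ (g : Expo) (u : K), u ≠ 0 ∧ toTorus hp n = mono g u := by
  have hf : toTorus hp n ≠ 0 := fun h => h0 (toTorus_injective hp (by rw [h, map_zero]))
  obtain ⟨g, hg⟩ := exists_coeff_ne_zero hf
  refine ⟨g, (toTorus hp n).coeff g, hg, ?_⟩
  -- two exponents in the support have the same commutation character
  have key : ∀ {a : A} {d : Expo} (_ : toTorus hp a = mono d 1) (g' : Expo)
      (_ : (toTorus hp n).coeff g' ≠ 0),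
      bichar p q l m g d * bichar p q l m d g' = bichar p q l m g' d * bichar p q l m d g := by
    intro a d ha g' hg'
    obtain ⟨γ, hγ⟩ := hn.exists_bichar hp h0 ha
    have h1 := hγ g hg
    have h2 := hγ g' hg'
    ext
    push_cast
    rw [h1, h2]
    ring
  have huniq : ∀ g', (toTorus hp n).coeff g' ≠ 0 → g' = g := by
    intro g' hg'
    have hz := key (toTorus_z hp) g' hg'
    have hx := key (toTorus_x hp) g' hg'
    have hs := key (toTorus_s hp) g' hg'
    have ht := key (toTorus_t hp) g' hg'
    simp [bichar] at hz hx hs ht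
    have e0 : g 0 = g' 0 := zpow_inj_of_not_root hpr hz
    rw [e0, mul_left_inj] at hs
    have e3 : g' 3 = g 3 := zpow_inj_of_not_root hqr hs
    rw [e0, mul_left_inj] at ht
    have e2 : g 2 = g' 2 := zpow_inj_of_not_root hqr ht
    rw [e2, e3, mul_right_inj] at hx
    have e1 : g' 1 = g 1 := zpow_inj_of_not_root hpr hx
    ext i
    fin_cases i
    · exact e0.symm
    · exact e1
    · exact e2.symm
    · exact e3
  ext g'
  rw [coeff_mono]
  split_ifs with h
  · rw [h]
  · by_contra hne
    exact h (huniq g' hne).symm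

/-- A normal element has degree zero in `x`: otherwise its conjugation would rescale the two
terms of `y` differently, and `x⁻¹` would lie in the image of `A`. -/
lemma IsNormalEl.exponent_zero (hpr : ∀ n : ℕ, 0 < n → (p : K) ^ n ≠ 1) {n : A}
    (hn : IsNormalEl n) {g : Expo} {u : K} (hu : u ≠ 0) (hg : toTorus hp n = mono g u) :
    g 0 = 0 := by
  obtain ⟨b, hb⟩ := hn 𝐲
  have h1 := congrArg (toTorus hp) hb
  rw [map_mul, map_mul, hg, toTorus_y] at h1
  set β : Expo → K := fun e => (bichar p q l m g e : K) * (bichar p q l m e g : K)⁻¹ with hβ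
  have hco : ∀ e, (toTorus hp b).coeff e = β e * (yTorus p q l m).coeff e := by
    intro e
    have h2 := congrArg (fun f => f.coeff (e + g)) h1
    simp only [coeff_mul_mono, coeff_mono_mul, add_sub_cancel_right] at h2
    have hne : (bichar p q l m e g : K) ≠ 0 := Units.ne_zero _
    simp only [hβ]
    field_simp
    apply mul_left_cancel₀ hu
    linear_combination -h2
  have hy : ∀ e, (yTorus p q l m : QTorus K p q l m).coeff e ≠ 0 →
      e = ![-1, 1, 0, 0] ∨ e = ![-1, 0, 0, 0] := by
    intro e he
    rw [yTorus, coeff_sub, coeff_mono, coeff_mono] at he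
    by_contra! H
    rw [if_neg H.1.symm, if_neg H.2.symm, sub_zero] at he
    exact he rfl
  have hb' : b - β ![-1, 1, 0, 0] • 𝐲 = 0 := by
    by_contra hne
    obtain ⟨e, he, hpos⟩ := exists_coeff_toTorus hp hne
    rw [map_sub, map_smul, coeff_sub, coeff_smul, hco, toTorus_y, ← sub_mul] at he
    rcases hy e (right_ne_zero_of_mul he) with rfl | rfl
    · simp at he
    · simp at hpos
  have h3 := congrArg (fun a => (toTorus hp a).coeff ![-1, 0, 0, 0]) hb'
  simp only [map_sub, map_smul, coeff_sub, coeff_smul, hco, toTorus_y, map_zero, coeff_zero,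
    ← sub_mul] at h3
  have hyne : (yTorus p q l m : QTorus K p q l m).coeff ![-1, 0, 0, 0] ≠ 0 := by
    rw [yTorus, coeff_sub, coeff_mono, coeff_mono, if_neg (by simp), if_pos rfl, zero_sub,
      neg_ne_zero]
    exact inv_ne_zero (sub_ne_zero.2 hp)
  have h4 := sub_eq_zero.1 ((mul_eq_zero.1 h3).resolve_right hyne)
  have h5 : bichar p q l m g ![-1, 0, 0, 0] * (bichar p q l m ![-1, 0, 0, 0] g)⁻¹ =
      bichar p q l m g ![-1, 1, 0, 0] * (bichar p q l m ![-1, 1, 0, 0] g)⁻¹ := by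
    ext
    push_cast
    exact h4
  simp [bichar] at h5
  exact zpow_eq_zero_of_not_root hpr h5

/-- The nonzero normal elements are the scalar multiples of the monomials `z^i s^j t^k`. -/
lemma IsNormalEl.eq_smul (hpr : ∀ n : ℕ, 0 < n → (p : K) ^ n ≠ 1)
    (hqr : ∀ n : ℕ, 0 < n → (q : K) ^ n ≠ 1) {n : A} (h0 : n ≠ 0) (hn : IsNormalEl n) :
    ∃ (c : K) (i j k : ℕ), c ≠ 0 ∧ n = c • (𝐳 ^ i * (𝐬 ^ j * 𝐭 ^ k)) := by
  have hp : (p : K) ≠ 1 := ne_one_of_not_root hpr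
  obtain ⟨g, u, hu, hg⟩ := hn.exists_mono hp hpr hqr h0
  have e0 := hn.exponent_zero hp hpr hu hg
  have hnn := coeff_toTorus_nonneg hp n g (by rw [hg, coeff_mono, if_pos rfl]; exact hu)
  obtain ⟨i, hi⟩ := Int.eq_ofNat_of_zero_le hnn.1
  obtain ⟨j, hj⟩ := Int.eq_ofNat_of_zero_le hnn.2.1
  obtain ⟨k, hk⟩ := Int.eq_ofNat_of_zero_le hnn.2.2
  obtain ⟨u₁, hu₁, h1⟩ :=
    mono_pow (p := p) (q := q) (l := l) (m := m) ![0, 1, 0, 0] one_ne_zero i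
  obtain ⟨u₂, hu₂, h2⟩ :=
    mono_pow (p := p) (q := q) (l := l) (m := m) ![0, 0, 1, 0] one_ne_zero j
  obtain ⟨u₃, hu₃, h3⟩ :=
    mono_pow (p := p) (q := q) (l := l) (m := m) ![0, 0, 0, 1] one_ne_zero k
  have he : i • ![0, 1, 0, 0] + (j • ![0, 0, 1, 0] + k • ![0, 0, 0, 1]) = g := by
    ext r
    fin_cases r <;> simp [e0, hi, hj, hk]
  have hprod : toTorus hp (𝐳 ^ i * (𝐬 ^ j * 𝐭 ^ k)) = mono (i • ![0, 1, 0, 0]) u₁ *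
      (mono (j • ![0, 0, 1, 0]) u₂ * mono (k • ![0, 0, 0, 1]) u₃) := by
    simp only [map_mul, map_pow, toTorus_z, toTorus_s, toTorus_t, h1, h2, h3]
  rw [mono_mul_mono, mono_mul_mono, he] at hprod
  set v := u₁ * (u₂ * u₃ * (bichar p q l m (j • ![0, 0, 1, 0]) (k • ![0, 0, 0, 1]) : K)) *
    (bichar p q l m (i • ![0, 1, 0, 0]) (j • ![0, 0, 1, 0] + k • ![0, 0, 0, 1]) : K) with hv
  have hv0 : v ≠ 0 := mul_ne_zero (mul_ne_zero hu₁ (mul_ne_zero (mul_ne_zero hu₂ hu₃)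
    (Units.ne_zero _))) (Units.ne_zero _)
  refine ⟨u * v⁻¹, i, j, k, mul_ne_zero hu (inv_ne_zero hv0), toTorus_injective hp ?_⟩
  rw [map_smul, hprod, hg, smul_mono, mul_assoc, inv_mul_cancel₀ hv0, mul_one]

end Normal

end ExtWeyl

namespace ExtWeyl

/-! ### Isomorphisms permute the normal generators -/

section Permute

open QTorus

variable {K : Type*} [Field K]

lemma ne_zero_of_toTorus {p q l m : Kˣ} (hp : (p : K) ≠ 1)
    {n : ExtWeyl K (p : K) (q : K) (l : K) (m : K)} {d : Expo}
    (hd : toTorus hp n = mono d 1) : n ≠ 0 := by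
  rintro rfl
  have := congrArg (fun f => f.coeff d) hd
  simp [coeff_mono] at this

lemma ne_smul_one_of_toTorus {p q l m : Kˣ} (hp : (p : K) ≠ 1)
    {n : ExtWeyl K (p : K) (q : K) (l : K) (m : K)} {d : Expo} (h0 : d ≠ 0)
    (hd : toTorus hp n = mono d 1) (c : K) : n ≠ c • 1 := by
  rintro rfl
  have := congrArg (fun f => f.coeff d) hd
  simp [coeff_mono, one_def, h0.symm] at this

/-- A normal element that is not a scalar is mapped to a monomial of positive total degree
in `z, s, t`. -/
lemma IsNormalEl.exists_pos_degree {p q l m : Kˣ} (hp : (p : K) ≠ 1)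
    (hpr : ∀ n : ℕ, 0 < n → (p : K) ^ n ≠ 1) (hqr : ∀ n : ℕ, 0 < n → (q : K) ^ n ≠ 1)
    {n : ExtWeyl K (p : K) (q : K) (l : K) (m : K)} (hn : IsNormalEl n)
    (hs : ∀ c : K, n ≠ c • 1) :
    ∃ (g : Expo) (u : K), u ≠ 0 ∧ toTorus hp n = mono g u ∧ 1 ≤ g 1 + g 2 + g 3 := by
  have h0 : n ≠ 0 := by simpa using hs 0
  obtain ⟨g, u, hu, hg⟩ := hn.exists_mono hp hpr hqr h0
  have e0 := hn.exponent_zero hp hpr hu hg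
  obtain ⟨h1, h2, h3⟩ :=
    coeff_toTorus_nonneg hp n g (by rw [hg, coeff_mono, if_pos rfl]; exact hu)
  refine ⟨g, u, hu, hg, ?_⟩
  by_contra hlt
  have hg0 : g = 0 := by
    ext i
    fin_cases i
    · exact e0
    · change g 1 = 0; omega
    · change g 2 = 0; omega
    · change g 3 = 0; omega
  refine hs u (toTorus_injective hp ?_)
  rw [hg, hg0, map_smul, map_one, one_def, smul_mono, mul_one]

variable {p₁ q₁ l₁ m₁ p₂ q₂ l₂ m₂ : Kˣ}

local notation "A₁" => ExtWeyl K (p₁ : K) (q₁ : K) (l₁ : K) (m₁ : K)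
local notation "A₂" => ExtWeyl K (p₂ : K) (q₂ : K) (l₂ : K) (m₂ : K)
local notation "𝐱₁" => gen (p₁ : K) (q₁ : K) (l₁ : K) (m₁ : K) 0
local notation "𝐲₁" => gen (p₁ : K) (q₁ : K) (l₁ : K) (m₁ : K) 1
local notation "𝐬₁" => gen (p₁ : K) (q₁ : K) (l₁ : K) (m₁ : K) 2
local notation "𝐭₁" => gen (p₁ : K) (q₁ : K) (l₁ : K) (m₁ : K) 3
local notation "𝐳₁" => zel (p₁ : K) (q₁ : K) (l₁ : K) (m₁ : K)
local notation "𝐬₂" => gen (p₂ : K) (q₂ : K) (l₂ : K) (m₂ : K) 2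
local notation "𝐭₂" => gen (p₂ : K) (q₂ : K) (l₂ : K) (m₂ : K) 3
local notation "𝐳₂" => zel (p₂ : K) (q₂ : K) (l₂ : K) (m₂ : K)

/-- A normal element of total degree one is irreducible among the normal monomials, so an
isomorphism carries it to a multiple of one of `z, s, t`. -/
lemma map_normal_generator
    (hpr₁ : ∀ n : ℕ, 0 < n → (p₁ : K) ^ n ≠ 1) (hqr₁ : ∀ n : ℕ, 0 < n → (q₁ : K) ^ n ≠ 1)
    (hpr₂ : ∀ n : ℕ, 0 < n → (p₂ : K) ^ n ≠ 1) (hqr₂ : ∀ n : ℕ, 0 < n → (q₂ : K) ^ n ≠ 1)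
    (hp₁ : (p₁ : K) ≠ 1)
    (φ : A₁ ≃ₐ[K] A₂) {n : A₁} (hn : IsNormalEl n) {d : Expo}
    (hd : toTorus hp₁ n = mono d 1) (hd1 : d 1 + d 2 + d 3 = 1) :
    ∃ c : K, c ≠ 0 ∧ (φ n = c • 𝐳₂ ∨ φ n = c • 𝐬₂ ∨ φ n = c • 𝐭₂) := by
  have hp₂ : (p₂ : K) ≠ 1 := ne_one_of_not_root hpr₂
  have hφ0 : φ n ≠ 0 := by simpa using ne_zero_of_toTorus hp₁ hd
  obtain ⟨c, i, j, k, hc, h⟩ := (hn.map φ).eq_smul hpr₂ hqr₂ hφ0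
  -- The preimage of a nonscalar normal element has positive total degree.
  have pre : ∀ {a : A₂} {e : Expo}, IsNormalEl a → e ≠ 0 → toTorus hp₂ a = mono e 1 →
      ∃ (g : Expo) (u : K), u ≠ 0 ∧ toTorus hp₁ (φ.symm a) = mono g u ∧
        1 ≤ g 1 + g 2 + g 3 := by
    intro a e ha he hea
    refine (ha.map φ.symm).exists_pos_degree hp₁ hpr₁ hqr₁ fun r hr => ?_
    refine ne_smul_one_of_toTorus hp₂ he hea r ?_
    have := congrArg φ hr
    simpa using this
  obtain ⟨g₁, u₁, hu₁, e₁, w₁⟩ := pre (isNormalEl_zel p₂.ne_zero l₂.ne_zero m₂.ne_zero)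
    (fun h => by simpa using congrFun h 1) (toTorus_z hp₂)
  obtain ⟨g₂, u₂, hu₂, e₂, w₂⟩ := pre (a := 𝐬₂) isNormalEl_s
    (fun h => by simpa using congrFun h 2) (toTorus_s hp₂)
  obtain ⟨g₃, u₃, hu₃, e₃, w₃⟩ := pre (a := 𝐭₂) (isNormalEl_t q₂.ne_zero)
    (fun h => by simpa using congrFun h 3) (toTorus_t hp₂)
  obtain ⟨v₁, hv₁, f₁⟩ :=
    mono_pow (p := p₁) (q := q₁) (l := l₁) (m := m₁) g₁ hu₁ i
  obtain ⟨v₂, hv₂, f₂⟩ :=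
    mono_pow (p := p₁) (q := q₁) (l := l₁) (m := m₁) g₂ hu₂ j
  obtain ⟨v₃, hv₃, f₃⟩ :=
    mono_pow (p := p₁) (q := q₁) (l := l₁) (m := m₁) g₃ hu₃ k
  have h' : n = c • (φ.symm 𝐳₂ ^ i * (φ.symm 𝐬₂ ^ j * φ.symm 𝐭₂ ^ k)) := by
    have := congrArg φ.symm h
    simpa using this
  have h2 := congrArg (toTorus hp₁) h'
  rw [hd, map_smul, map_mul, map_mul, map_pow, map_pow, map_pow, e₁, e₂, e₃, f₁, f₂, f₃,
    mono_mul_mono, mono_mul_mono, smul_mono] at h2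
  have hdeg : i • g₁ + (j • g₂ + k • g₃) = d := by
    by_contra hne
    have := congrArg (fun f => f.coeff d) h2
    simp only [coeff_mono, if_neg hne] at this
    simp at this
  have hsum : (i : ℤ) * (g₁ 1 + g₁ 2 + g₁ 3) + j * (g₂ 1 + g₂ 2 + g₂ 3) +
      k * (g₃ 1 + g₃ 2 + g₃ 3) = 1 := by
    rw [← hd1, ← hdeg]
    simp
    ring
  have hle : i + j + k ≤ 1 := by
    zify
    nlinarith [mul_le_mul_of_nonneg_left w₁ (Int.natCast_nonneg i),
      mul_le_mul_of_nonneg_left w₂ (Int.natCast_nonneg j),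
      mul_le_mul_of_nonneg_left w₃ (Int.natCast_nonneg k)]
  have hne : ¬ (i = 0 ∧ j = 0 ∧ k = 0) := by
    rintro ⟨rfl, rfl, rfl⟩
    simp at hsum
  have hcases : (i = 1 ∧ j = 0 ∧ k = 0) ∨ (i = 0 ∧ j = 1 ∧ k = 0) ∨
      (i = 0 ∧ j = 0 ∧ k = 1) := by omega
  refine ⟨c, hc, ?_⟩
  rcases hcases with ⟨rfl, rfl, rfl⟩ | ⟨rfl, rfl, rfl⟩ | ⟨rfl, rfl, rfl⟩
  · left; simpa using h
  · right; left; simpa using h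
  · right; right; simpa using h

lemma not_commute_s_t {p q l m : Kˣ} (hp : (p : K) ≠ 1) (hq : (q : K) ≠ 1) :
    ¬ Commute (gen (p : K) (q : K) (l : K) (m : K) 2) (gen (p : K) (q : K) (l : K) (m : K) 3) := by
  intro h
  have h1 := congrArg (fun a => (toTorus hp a).coeff ![0, 0, 1, 1]) h.eq
  simp [toTorus_s, toTorus_t, bichar, coeff_mono] at h1
  exact hq (by rw [h1, Units.val_one])

lemma commute_smul_iff {p q l m : K} {c c' : K} {a b : ExtWeyl K p q l m} (hc : c ≠ 0)
    (hc' : c' ≠ 0) : Commute (c • a) (c' • b) ↔ Commute a b := by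
  constructor
  · intro h
    have h2 : Commute (c⁻¹ • c • a) (c'⁻¹ • c' • b) := (h.smul_left c⁻¹).smul_right c'⁻¹
    rwa [inv_smul_smul₀ hc, inv_smul_smul₀ hc'] at h2
  · intro h
    exact (h.smul_left c).smul_right c'

/-- The element `z` is characterised, among the normal generators, by commuting with the other
two; hence an isomorphism fixes `z` and fixes or exchanges `s` and `t`, up to scalars. -/
lemma straight_or_swapped
    (hpr₁ : ∀ n : ℕ, 0 < n → (p₁ : K) ^ n ≠ 1) (hqr₁ : ∀ n : ℕ, 0 < n → (q₁ : K) ^ n ≠ 1)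
    (hpr₂ : ∀ n : ℕ, 0 < n → (p₂ : K) ^ n ≠ 1) (hqr₂ : ∀ n : ℕ, 0 < n → (q₂ : K) ^ n ≠ 1)
    (φ : A₁ ≃ₐ[K] A₂) :
    ∃ u v w : K, u ≠ 0 ∧ v ≠ 0 ∧ w ≠ 0 ∧ φ 𝐳₁ = u • 𝐳₂ ∧
      ((φ 𝐬₁ = v • 𝐬₂ ∧ φ 𝐭₁ = w • 𝐭₂) ∨ (φ 𝐬₁ = v • 𝐭₂ ∧ φ 𝐭₁ = w • 𝐬₂)) := by
  have hp₁ : (p₁ : K) ≠ 1 := ne_one_of_not_root hpr₁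
  have hp₂ : (p₂ : K) ≠ 1 := ne_one_of_not_root hpr₂
  have hq₁ : (q₁ : K) ≠ 1 := ne_one_of_not_root hqr₁
  have hq₂ : (q₂ : K) ≠ 1 := ne_one_of_not_root hqr₂
  obtain ⟨u, hu, hz⟩ := map_normal_generator hpr₁ hqr₁ hpr₂ hqr₂ hp₁ φ
    (isNormalEl_zel p₁.ne_zero l₁.ne_zero m₁.ne_zero) (toTorus_z hp₁) (by simp)
  obtain ⟨v, hv, hs⟩ := map_normal_generator hpr₁ hqr₁ hpr₂ hqr₂ hp₁ φ
    (isNormalEl_s) (toTorus_s hp₁) (by simp)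
  obtain ⟨w, hw, ht⟩ := map_normal_generator hpr₁ hqr₁ hpr₂ hqr₂ hp₁ φ
    (isNormalEl_t q₁.ne_zero) (toTorus_t hp₁) (by simp)
  have nst : ¬ Commute (φ 𝐬₁) (φ 𝐭₁) := by
    intro h
    have := h.map φ.symm
    simp only [AlgEquiv.symm_apply_apply] at this
    exact not_commute_s_t hp₁ hq₁ this
  have czs : Commute (φ 𝐳₁) (φ 𝐬₁) := Commute.map (s_zel l₁.ne_zero).symm φ
  have czt : Commute (φ 𝐳₁) (φ 𝐭₁) := Commute.map (t_zel m₁.ne_zero).symm φ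
  have c2s : Commute 𝐳₂ 𝐬₂ := (s_zel l₂.ne_zero).symm
  have c2t : Commute 𝐳₂ 𝐭₂ := (t_zel m₂.ne_zero).symm
  have n2 : ¬ Commute 𝐬₂ 𝐭₂ := not_commute_s_t hp₂ hq₂
  have n2' : ¬ Commute 𝐭₂ 𝐬₂ := fun h => n2 h.symm
  have hst : (φ 𝐬₁ = v • 𝐬₂ ∧ φ 𝐭₁ = w • 𝐭₂) ∨ (φ 𝐬₁ = v • 𝐭₂ ∧ φ 𝐭₁ = w • 𝐬₂) := by
    rcases hs with hs | hs | hs <;> rcases ht with ht | ht | ht <;>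
      rw [hs, ht, commute_smul_iff hv hw] at nst
    · exact absurd (Commute.refl _) nst
    · exact absurd c2s nst
    · exact absurd c2t nst
    · exact absurd c2s.symm nst
    · exact absurd (Commute.refl _) nst
    · exact Or.inl ⟨hs, ht⟩
    · exact absurd c2t.symm nst
    · exact Or.inr ⟨hs, ht⟩
    · exact absurd (Commute.refl _) nst
  refine ⟨u, v, w, hu, hv, hw, ?_, hst⟩
  rcases hz with hz | hz | hz
  · exact hz
  · rw [hz] at czs czt
    rcases hst with ⟨hs, ht⟩ | ⟨hs, ht⟩
    · rw [ht, commute_smul_iff hu hw] at czt; exact absurd czt n2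
    · rw [hs, commute_smul_iff hu hv] at czs; exact absurd czs n2
  · rw [hz] at czs czt
    rcases hst with ⟨hs, ht⟩ | ⟨hs, ht⟩
    · rw [hs, commute_smul_iff hu hv] at czs; exact absurd czs n2'
    · rw [ht, commute_smul_iff hu hw] at czt; exact absurd czt n2'

/-! ### Comparing the parameters -/

/-- If `φ` sends the pair `(n, a)`, with `a n = γ n a`, to elements whose torus images are a
monomial of degree `d` and an element with `g` in its support, then the commutation factor of
degrees `g` and `d` is `γ`. -/
lemma bichar_of_map (hp₂ : (p₂ : K) ≠ 1) (φ : A₁ ≃ₐ[K] A₂) {a n : A₁} {γ : K}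
    (h : a * n = γ • (n * a)) {n' : A₂} {u : K} (hu : u ≠ 0) (hn : φ n = u • n') {d : Expo}
    (hd : toTorus hp₂ n' = mono d 1) {g : Expo} (hg : (toTorus hp₂ (φ a)).coeff g ≠ 0) :
    (bichar p₂ q₂ l₂ m₂ g d : K) = γ * bichar p₂ q₂ l₂ m₂ d g := by
  refine bichar_eq_of_commute (u := u) (f := toTorus hp₂ (φ a)) hu ?_ hg
  have h1 := congrArg (fun a => toTorus hp₂ (φ a)) h
  have h2 : u • (mono d 1 : QTorus K p₂ q₂ l₂ m₂) = mono d u := by rw [smul_mono, mul_one]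
  simpa only [map_mul, map_smul, hn, hd, h2] using h1

/-- An isomorphism which fixes `z, s, t` up to scalars forces the parameters of the source to
be a common power of those of the target. -/
lemma params_of_straight
    (hpr₂ : ∀ n : ℕ, 0 < n → (p₂ : K) ^ n ≠ 1) (hqr₂ : ∀ n : ℕ, 0 < n → (q₂ : K) ^ n ≠ 1)
    (hp₁ : (p₁ : K) ≠ 1) (φ : A₁ ≃ₐ[K] A₂) {u v w : K} (hu : u ≠ 0) (hv : v ≠ 0) (hw : w ≠ 0)
    (hz : φ 𝐳₁ = u • 𝐳₂) (hs : φ 𝐬₁ = v • 𝐬₂) (ht : φ 𝐭₁ = w • 𝐭₂) :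
    q₁ = q₂ ∧ ∃ n : ℤ, p₁ = p₂ ^ n ∧ l₁ = l₂ ^ n ∧ m₁ = m₂ ^ n := by
  have hp₂ : (p₂ : K) ≠ 1 := ne_one_of_not_root hpr₂
  have x0 : toTorus hp₂ (φ 𝐱₁) ≠ 0 := by
    rw [Ne, map_eq_zero_iff _ (toTorus_injective hp₂), map_eq_zero_iff _ φ.injective]
    exact ne_zero_of_toTorus hp₁ (toTorus_x hp₁)
  have y0 : toTorus hp₂ (φ 𝐲₁) ≠ 0 := by
    rw [Ne, map_eq_zero_iff _ (toTorus_injective hp₂), map_eq_zero_iff _ φ.injective]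
    intro h
    have hr := rel_weyl (p := (p₁ : K)) (q := (q₁ : K)) (l := (l₁ : K)) (m := (m₁ : K))
    rw [h] at hr
    have h1 := congrArg (toTorus hp₁) hr
    have h2 := congrArg (fun f => f.coeff 0) h1
    simp [one_def, coeff_mono] at h2
  obtain ⟨g, hg⟩ := exists_coeff_ne_zero x0
  obtain ⟨g', hg'⟩ := exists_coeff_ne_zero y0
  have s0 : (toTorus hp₂ (φ 𝐬₁)).coeff ![0, 0, 1, 0] ≠ 0 := by
    rw [hs, map_smul, toTorus_s, smul_mono, coeff_mono, if_pos rfl, mul_one]; exact hv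
  have eq := bichar_of_map hp₂ φ rel_st hw ht (toTorus_t hp₂) s0
  have xz := bichar_of_map hp₂ φ x_zel hu hz (toTorus_z hp₂) hg
  have xs := bichar_of_map hp₂ φ (eq_inv_smul l₁.ne_zero rel_sx) hv hs (toTorus_s hp₂) hg
  have xt := bichar_of_map hp₂ φ (eq_inv_smul m₁.ne_zero rel_tx) hw ht (toTorus_t hp₂) hg
  have yz := bichar_of_map hp₂ φ (eq_inv_smul p₁.ne_zero zel_y) hu hz (toTorus_z hp₂) hg'
  have ys := bichar_of_map hp₂ φ (eq_inv_smul (inv_ne_zero l₁.ne_zero) rel_sy) hv hs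
    (toTorus_s hp₂) hg'
  have yt := bichar_of_map hp₂ φ (eq_inv_smul (inv_ne_zero m₁.ne_zero) rel_ty) hw ht
    (toTorus_t hp₂) hg'
  obtain ⟨-, g2, g3⟩ := coeff_toTorus_nonneg hp₂ _ g hg
  obtain ⟨-, g2', g3'⟩ := coeff_toTorus_nonneg hp₂ _ g' hg'
  simp only [← Units.val_inv_eq_inv_val, ← Units.val_mul, Units.val_inj] at eq xz xs xt yz ys yt
  simp [bichar] at eq xz xs xt yz ys yt
  have e0 : g' 0 = - g 0 := zpow_inj_of_not_root hpr₂ (by rw [yz, zpow_neg, xz])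
  rw [e0, zpow_neg] at ys yt
  -- The `s`- and `t`-exponents of `φ x` and `φ y` are opposite and nonnegative, hence zero.
  have e3 : g 3 + g' 3 = 0 := by
    refine zpow_eq_zero_of_not_root hqr₂ ?_
    rw [zpow_add]
    have h := congrArg₂ (· * ·) xs ys
    simp only [mul_one] at h
    rw [h]
    ext
    push_cast
    field_simp
  have e2 : g 2 + g' 2 = 0 := by
    refine zpow_eq_zero_of_not_root hqr₂ ?_
    rw [zpow_add, xt, yt]
    ext
    push_cast
    field_simp
  have e3' : g 3 = 0 := by omega
  have e2' : g 2 = 0 := by omega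
  rw [e3', zpow_zero, one_mul] at xs
  rw [e2', zpow_zero] at xt
  exact ⟨eq.symm, g 0, xz.symm, inv_mul_eq_one.1 xs.symm, inv_mul_eq_one.1 xt.symm⟩

/-- In the situation of `params_of_straight` the common exponent is `1` or `-1`, since the
inverse isomorphism provides an inverse exponent. -/
lemma params_of_straight_eq
    (hpr₁ : ∀ n : ℕ, 0 < n → (p₁ : K) ^ n ≠ 1) (hqr₁ : ∀ n : ℕ, 0 < n → (q₁ : K) ^ n ≠ 1)
    (hpr₂ : ∀ n : ℕ, 0 < n → (p₂ : K) ^ n ≠ 1) (hqr₂ : ∀ n : ℕ, 0 < n → (q₂ : K) ^ n ≠ 1)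
    (φ : A₁ ≃ₐ[K] A₂) {u v w : K} (hu : u ≠ 0) (hv : v ≠ 0) (hw : w ≠ 0)
    (hz : φ 𝐳₁ = u • 𝐳₂) (hs : φ 𝐬₁ = v • 𝐬₂) (ht : φ 𝐭₁ = w • 𝐭₂) :
    q₁ = q₂ ∧ ((p₁ = p₂ ∧ l₁ = l₂ ∧ m₁ = m₂) ∨ (p₁ = p₂⁻¹ ∧ l₁ = l₂⁻¹ ∧ m₁ = m₂⁻¹)) := by
  have inv : ∀ {a : A₁} {b : A₂} {c : K}, c ≠ 0 → φ a = c • b → φ.symm b = c⁻¹ • a := by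
    intro a b c hc h
    have h1 : a = c • φ.symm b := by
      have := congrArg φ.symm h
      simpa using this
    exact eq_inv_smul hc h1
  obtain ⟨hq, n, hp, hl, hm⟩ :=
    params_of_straight hpr₂ hqr₂ (ne_one_of_not_root hpr₁) φ hu hv hw hz hs ht
  obtain ⟨-, n', hp', -, -⟩ :=
    params_of_straight hpr₁ hqr₁ (ne_one_of_not_root hpr₂) φ.symm (inv_ne_zero hu)
      (inv_ne_zero hv) (inv_ne_zero hw) (inv hu hz) (inv hv hs) (inv hw ht)
  have hnn : n * n' = 1 := by
    refine zpow_inj_of_not_root hpr₂ ?_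
    rw [zpow_mul, ← hp, ← hp', zpow_one]
  refine ⟨hq, ?_⟩
  rcases Int.isUnit_iff.1 (IsUnit.of_mul_eq_one _ hnn) with rfl | rfl
  · exact Or.inl ⟨by simpa using hp, by simpa using hl, by simpa using hm⟩
  · exact Or.inr ⟨by simpa using hp, by simpa using hl, by simpa using hm⟩

/-- The parameters of isomorphic algebras are related in one of the four listed ways. -/
lemma params_of_equiv
    (hpr₁ : ∀ n : ℕ, 0 < n → (p₁ : K) ^ n ≠ 1) (hqr₁ : ∀ n : ℕ, 0 < n → (q₁ : K) ^ n ≠ 1)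
    (hpr₂ : ∀ n : ℕ, 0 < n → (p₂ : K) ^ n ≠ 1) (hqr₂ : ∀ n : ℕ, 0 < n → (q₂ : K) ^ n ≠ 1)
    (φ : A₁ ≃ₐ[K] A₂) :
    (p₁ = p₂ ∧ q₁ = q₂ ∧ l₁ = l₂ ∧ m₁ = m₂) ∨
    (p₁ = p₂⁻¹ ∧ q₁ = q₂ ∧ l₁ = l₂⁻¹ ∧ m₁ = m₂⁻¹) ∨
    (p₁ = p₂ ∧ q₁ = q₂⁻¹ ∧ l₁ = m₂ ∧ l₂ = m₁) ∨
    (p₁ = p₂⁻¹ ∧ q₁ = q₂⁻¹ ∧ l₁ = m₂⁻¹ ∧ l₂ = m₁⁻¹) := by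
  obtain ⟨u, v, w, hu, hv, hw, hz, ⟨hs, ht⟩ | ⟨hs, ht⟩⟩ :=
    straight_or_swapped hpr₁ hqr₁ hpr₂ hqr₂ φ
  · obtain ⟨hq, ⟨hp, hl, hm⟩ | ⟨hp, hl, hm⟩⟩ :=
      params_of_straight_eq hpr₁ hqr₁ hpr₂ hqr₂ φ hu hv hw hz hs ht
    · exact Or.inl ⟨hp, hq, hl, hm⟩
    · exact Or.inr (Or.inl ⟨hp, hq, hl, hm⟩)
  -- Composing with the exchange of `s` and `t` on the target reduces to the previous case.
  · obtain ⟨e, ex, ey, es, et⟩ := exists_swapEquiv (p := (p₂ : K)) (l := (l₂ : K)) (m := (m₂ : K))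
      q₂.ne_zero (Units.val_inv_eq_inv_val q₂)
    have ez : e 𝐳₂ = zel (p₂ : K) ((q₂⁻¹ : Kˣ) : K) (m₂ : K) (l₂ : K) := by
      simp [zel, ex, ey]
    have hqr₂' : ∀ n : ℕ, 0 < n → ((q₂⁻¹ : Kˣ) : K) ^ n ≠ 1 := by
      intro n hn h
      refine hqr₂ n hn ?_
      rwa [Units.val_inv_eq_inv_val, inv_pow, inv_eq_one] at h
    obtain ⟨hq, ⟨hp, hl, hm⟩ | ⟨hp, hl, hm⟩⟩ :=
      params_of_straight_eq hpr₁ hqr₁ hpr₂ hqr₂' (φ.trans e) hu hv hw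
        (by rw [AlgEquiv.trans_apply, hz, map_smul, ez])
        (by rw [AlgEquiv.trans_apply, hs, map_smul, et])
        (by rw [AlgEquiv.trans_apply, ht, map_smul, es])
    · exact Or.inr (Or.inr (Or.inl ⟨hp, hq, hl, hm.symm⟩))
    · exact Or.inr (Or.inr (Or.inr ⟨hp, hq, hl, by rw [hm, inv_inv]⟩))

end Permute

end ExtWeyl

/-- Assume none of `p₁, p₂, q₁, q₂` is a root of unity. Then
`A_{p₁}(λ₁, μ₁, K_{q₁}[s₁,t₁]) ≅ A_{p₂}(λ₂, μ₂, K_{q₂}[s₂,t₂])` as `K`-algebras iff one of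
the four listed conditions on the parameters holds. -/
theorem extWeyl_isomorphism_classification
    (K : Type*) [Field K] (p₁ q₁ lam₁ mu₁ p₂ q₂ lam₂ mu₂ : K)
    (hp₁ : p₁ ≠ 0) (hq₁ : q₁ ≠ 0) (hlam₁ : lam₁ ≠ 0) (hmu₁ : mu₁ ≠ 0)
    (hp₂ : p₂ ≠ 0) (hq₂ : q₂ ≠ 0) (hlam₂ : lam₂ ≠ 0) (hmu₂ : mu₂ ≠ 0)
    (hpru₁ : ∀ n : ℕ, 0 < n → p₁ ^ n ≠ 1) (hqru₁ : ∀ n : ℕ, 0 < n → q₁ ^ n ≠ 1)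
    (hpru₂ : ∀ n : ℕ, 0 < n → p₂ ^ n ≠ 1) (hqru₂ : ∀ n : ℕ, 0 < n → q₂ ^ n ≠ 1) :
    Nonempty (ExtWeyl K p₁ q₁ lam₁ mu₁ ≃ₐ[K] ExtWeyl K p₂ q₂ lam₂ mu₂) ↔
      (p₁ = p₂ ∧ q₁ = q₂ ∧ lam₁ = lam₂ ∧ mu₁ = mu₂) ∨
      (p₁ = p₂⁻¹ ∧ q₁ = q₂ ∧ lam₁ = lam₂⁻¹ ∧ mu₁ = mu₂⁻¹) ∨
      (p₁ = p₂ ∧ q₁ = q₂⁻¹ ∧ lam₁ = mu₂ ∧ lam₂ = mu₁) ∨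
      (p₁ = p₂⁻¹ ∧ q₁ = q₂⁻¹ ∧ lam₁ = mu₂⁻¹ ∧ lam₂ = mu₁⁻¹) := by
  constructor
  · rintro ⟨φ⟩
    lift p₁ to Kˣ using hp₁.isUnit
    lift q₁ to Kˣ using hq₁.isUnit
    lift lam₁ to Kˣ using hlam₁.isUnit
    lift mu₁ to Kˣ using hmu₁.isUnit
    lift p₂ to Kˣ using hp₂.isUnit
    lift q₂ to Kˣ using hq₂.isUnit
    lift lam₂ to Kˣ using hlam₂.isUnit
    lift mu₂ to Kˣ using hmu₂.isUnit
    have h := ExtWeyl.params_of_equiv hpru₁ hqru₁ hpru₂ hqru₂ φ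
    simpa only [← Units.val_inv_eq_inv_val, Units.val_inj] using h
  · rintro (⟨rfl, rfl, rfl, rfl⟩ | ⟨hp, rfl, hl, hm⟩ | ⟨rfl, hq, rfl, rfl⟩ | ⟨hp, hq, hl, hm⟩)
    · exact ⟨AlgEquiv.refl⟩
    · exact ExtWeyl.nonempty_flipEquiv hp₁ (by rw [hp, inv_inv]) (by rw [hl, inv_inv])
        (by rw [hm, inv_inv])
    · obtain ⟨e, -⟩ := ExtWeyl.exists_swapEquiv (p := p₁) (l := lam₁) (m := lam₂) hq₁
        (q' := q₂) (by rw [hq, inv_inv])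
      exact ⟨e⟩
    · obtain ⟨e, -⟩ := ExtWeyl.exists_swapEquiv (p := p₁) (l := lam₁) (m := mu₁) hq₁
        (q' := q₂) (by rw [hq, inv_inv])
      obtain ⟨f⟩ := ExtWeyl.nonempty_flipEquiv (q := q₂) (l := mu₁) (m := lam₁) hp₁ (p' := p₂)
        (l' := lam₂) (m' := mu₂) (by rw [hp, inv_inv]) hm (by rw [hl, inv_inv])
      exact ⟨e.trans f⟩
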